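/- Let r,q ≥ 1 with rq > 1. Then there is exactly one meander position m* ∈ {1,…,N} with Morse number i_{m*} = r+q, and for every other position m ≠ m* there exists a directed path from m* to m in the connection digraph of σ_{rq}. (This is the combinatorial content of the statement that the Sturm attractor A_{rq} is the closure of the unstable manifold of a single equilibrium, i.e., a Sturm ball of dimension r+q.) -/

import Mathlib

/-- Morse numbers `i_j` of a permutation `σ` of `{1,…,N}` (extended to `ℕ`),
via the recursion `i_1 = 0`,
`i_{j+1} = i_j + (-1)^(j+1) * sign (σ⁻¹(j+1) - σ⁻¹(j))`. -/
def morse (σ : Equiv.Perm ℕ) : ℕ → ℤ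
  | 0 => 0
  | 1 => 0
  | (j+2) => morse σ (j+1) +
      (-1)^(j+2) * Int.sign ((σ.symm (j+2) : ℤ) - (σ.symm (j+1) : ℤ))

/-- Zero numbers `z_{j k}`, recursion in the first index `j`, second index `k` fixed:
`z_{1k} = 0`, `z_{kk} = i_k`, `z_{k+1,k} = min (i_k, i_{k+1})`, and otherwise
`z_{j+1,k} = z_{jk} + ((-1)^(j+1)/2) * (sign (σ⁻¹(j+1) - σ⁻¹(k)) - sign (σ⁻¹(j) - σ⁻¹(k)))`. -/
def zrec (σ : Equiv.Perm ℕ) (k : ℕ) : ℕ → ℤ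
  | 0 => 0
  | 1 => 0
  | (j+2) =>
      if j+2 = k then morse σ k
      else if j+1 = k then min (morse σ k) (morse σ (k+1))
      else zrec σ k (j+1) +
        ((-1)^(j+2) * (Int.sign ((σ.symm (j+2) : ℤ) - (σ.symm k : ℤ))
          - Int.sign ((σ.symm (j+1) : ℤ) - (σ.symm k : ℤ)))) / 2

/-- The zero number `z_{m n}`. -/
def zfun (σ : Equiv.Perm ℕ) (m n : ℕ) : ℤ := zrec σ n m

/-- The connection digraph of a dissipative Morse permutation `σ` of `{1,…,N}`:
an edge `m ⤳ n` iff `i_m = i_n + 1` and no `w` strictly between `m` and `n`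
blocks, i.e. satisfies `z_{mw} = z_{wn} = z_{mn}`. -/
def hasEdge (N : ℕ) (σ : Equiv.Perm ℕ) (m n : ℕ) : Prop :=
  1 ≤ m ∧ m ≤ N ∧ 1 ≤ n ∧ n ≤ N ∧
  morse σ m = morse σ n + 1 ∧
  ¬ ∃ w : ℕ, min m n < w ∧ w < max m n ∧
      zfun σ m w = zfun σ w n ∧ zfun σ w n = zfun σ m n

/-- A dissipative permutation of `{1,…,N}`. -/
def Dissipative (N : ℕ) (σ : Equiv.Perm ℕ) : Prop :=
  Set.BijOn σ (Set.Icc 1 N) (Set.Icc 1 N) ∧ σ 1 = 1 ∧ σ N = N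

/-- The Morse property: all Morse numbers are nonnegative. -/
def MorseProp (N : ℕ) (σ : Equiv.Perm ℕ) : Prop :=
  ∀ j, 1 ≤ j → j ≤ N → 0 ≤ morse σ j

/-- Morse counts `μ(i) = #{j ∈ {1,…,N} : i_j = i}`. -/
def morseCount (N : ℕ) (σ : Equiv.Perm ℕ) (i : ℤ) : ℕ :=
  ((Finset.Icc 1 N).filter (fun j => morse σ j = i)).card

/-- The primitive 3-nose permutation `σ_{rq}` of `{1,…,N}`, `N = 2(r+1)(q+1)-1`,
characterized by its defining relations, extended to a permutation of `ℕ`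
fixing everything outside `{1,…,N}`. -/
def SigmaRQ (r q : ℕ) (σ : Equiv.Perm ℕ) : Prop :=
  (∀ a, a ∉ Set.Icc 1 (2*(r+1)*(q+1) - 1) → σ a = a) ∧
  (∀ j k, j ≤ r → k ≤ q →
    σ (2*((q+1)*j+k)+1) = 2*(j+(r+1)*k)+1) ∧
  (∀ j k, j ≤ r → k ≤ q → ¬(j = 0 ∧ k = 0) →
    σ (2*((q+1)*(r-j)+(q-k)+1)) = 2*(j+(r+1)*k))

/-- Tags `A`, `B` of equilibrium labels `A^j_k`, `B^j_k`. -/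
inductive Tag | A | B
deriving DecidableEq

/-- The axis position (`h_1`-position) of the label `L^j_k` for parameters `(r,q)`. -/
def axisPos (r q : ℕ) : Tag → ℕ → ℕ → ℕ
  | Tag.A, j, k => if Odd j then (q+1)*(j-1)+k+1 else (q+1)*(2*r+1-j)+(q-k)+1
  | Tag.B, j, k => if Odd j then (q+1)*j+(q-k)+1 else (q+1)*(2*r-j)+k+1

/-- The meander position (`h_0`-position) of the label `L^j_k` for parameters `(r,q)`. -/
def meanderPos (r q : ℕ) : Tag → ℕ → ℕ → ℕ
  | Tag.A, j, k => if Odd k then (r+1)*(2*q+1-k)+(2*r+1-j) else (r+1)*k+j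
  | Tag.B, j, k => if Odd k then (r+1)*(2*q+1-k)+j else (r+1)*(k+1)+(r-j)

/-- The suspension `σ̃` of a dissipative permutation `σ` of `{1,…,N}`:
`σ̃(1) = 1`, `σ̃(N+2) = N+2`, and `σ̃(a+1) = N+2 - σ(a)` for `1 ≤ a ≤ N`. -/
def IsSuspension (N : ℕ) (σ σt : Equiv.Perm ℕ) : Prop :=
  σt 1 = 1 ∧ σt (N+2) = N+2 ∧ ∀ a, 1 ≤ a → a ≤ N → σt (a+1) = N+2 - σ a

/-- The label `A^0_0` is the distinguished (formal) vertex `⋆`. -/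
def IsStar (L : Tag) (j k : ℕ) : Prop := L = Tag.A ∧ j = 0 ∧ k = 0

/-- Tag swap `A ↔ B`, used by the reversor. -/
def tagSwap : Tag → Tag
  | Tag.A => Tag.B
  | Tag.B => Tag.A

/-- Values of `Int.sign` on a difference of distinct naturals. -/
theorem sign_sub_cases (a b : ℕ) (h : a ≠ b) :
    (a < b ∧ Int.sign ((a : ℤ) - b) = -1) ∨ (b < a ∧ Int.sign ((a : ℤ) - b) = 1) := by
  rcases lt_or_gt_of_ne h with h | h
  · exact Or.inl ⟨h, Int.sign_eq_neg_one_of_neg (by omega)⟩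
  · exact Or.inr ⟨h, Int.sign_eq_one_of_pos (by omega)⟩

theorem neg_one_pow_cases (n : ℕ) :
    (n % 2 = 0 ∧ (-1 : ℤ) ^ n = 1) ∨ (n % 2 = 1 ∧ (-1 : ℤ) ^ n = -1) := by
  rcases Nat.even_or_odd n with h | h
  · exact Or.inl ⟨Nat.even_iff.mp h, h.neg_one_pow⟩
  · exact Or.inr ⟨Nat.odd_iff.mp h, h.neg_one_pow⟩

/-- Parity of Morse numbers. -/
theorem morse_parity (σ : Equiv.Perm ℕ) (j : ℕ) : (morse σ (j+1)) % 2 = (j : ℤ) % 2 := by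
  induction j with
  | zero => simp [morse]
  | succ j ih =>
    have hne : σ.symm (j+2) ≠ σ.symm (j+1) := fun h => by
      have := σ.symm.injective h
      omega
    rw [show j + 1 + 1 = j + 2 from rfl, morse]
    rcases sign_sub_cases _ _ hne with ⟨_, h⟩ | ⟨_, h⟩ <;>
    rcases neg_one_pow_cases (j+2) with ⟨_, h'⟩ | ⟨_, h'⟩ <;> rw [h, h'] <;> push_cast <;> omega

/-- Parity of zero numbers. -/
theorem zrec_parity (σ : Equiv.Perm ℕ) (h0 : σ.symm 0 = 0) (h1 : σ.symm 1 = 1) (k : ℕ)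
    (hk : 1 ≤ k) (j : ℕ) : j + 1 ≠ k →
    (zrec σ k (j+1) % 2 = 0 ↔ (j + 1 < k ↔ σ.symm (j+1) < σ.symm k)) := by
  induction j with
  | zero =>
    intro hne
    have a0 : σ.symm k ≠ σ.symm 0 := fun h => by
      have := σ.symm.injective h
      omega
    have a1 : σ.symm k ≠ σ.symm 1 := fun h => by
      have := σ.symm.injective h
      omega
    simp only [zrec, zero_add]
    omega
  | succ j ih =>
    intro hne
    have b1 : σ.symm (j+2) ≠ σ.symm k := fun h => by
      have := σ.symm.injective h
      omega
    rw [show j + 1 + 1 = j + 2 from rfl, zrec, if_neg hne]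
    split_ifs with hk1
    · subst hk1
      have hp := morse_parity σ j
      rw [show j + 1 + 1 = j + 2 from rfl, morse]
      rcases sign_sub_cases _ _ b1 with ⟨_, h⟩ | ⟨_, h⟩ <;>
      rcases neg_one_pow_cases (j+2) with ⟨_, h'⟩ | ⟨_, h'⟩ <;> rw [h, h'] <;> omega
    · have ih' := ih hk1
      have b2 : σ.symm (j+1) ≠ σ.symm k := fun h => by
        have := σ.symm.injective h
        omega
      rcases sign_sub_cases _ _ b1 with ⟨_, h⟩ | ⟨_, h⟩ <;>
      rcases sign_sub_cases _ _ b2 with ⟨_, g⟩ | ⟨_, g⟩ <;>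
      rcases neg_one_pow_cases (j+2) with ⟨_, h'⟩ | ⟨_, h'⟩ <;> rw [h, g, h'] <;> norm_num <;> omega

/-- Positions adjacent on the axis, with consecutive Morse numbers, are joined by an edge. -/
theorem edge_axis (N : ℕ) (σ : Equiv.Perm ℕ) (h0 : σ.symm 0 = 0) (h1 : σ.symm 1 = 1) (m n : ℕ)
    (hm : 1 ≤ m) (hmN : m ≤ N) (hn : 1 ≤ n) (hnN : n ≤ N) (hi : morse σ m = morse σ n + 1)
    (hadj : σ.symm m = σ.symm n + 1 ∨ σ.symm n = σ.symm m + 1) : hasEdge N σ m n := by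
  refine ⟨hm, hmN, hn, hnN, hi, ?_⟩
  rintro ⟨w, hw1, hw2, he, -⟩
  simp only [zfun] at he
  obtain ⟨m, rfl⟩ : ∃ m', m = m' + 1 := ⟨m - 1, by omega⟩
  obtain ⟨w, rfl⟩ : ∃ w', w = w' + 1 := ⟨w - 1, by omega⟩
  have e1 := zrec_parity σ h0 h1 (w+1) (by omega) m (by omega)
  have e2 := zrec_parity σ h0 h1 n (by omega) w (by omega)
  have a0 : σ.symm (w+1) ≠ σ.symm n := fun h => by
    have := σ.symm.injective h
    omega
  have a1 : σ.symm (w+1) ≠ σ.symm (m+1) := fun h => by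
    have := σ.symm.injective h
    omega
  rw [he, e2] at e1
  omega

/-- Positions adjacent on the meander, with consecutive Morse numbers, are joined by an edge. -/
theorem edge_meander (N : ℕ) (σ : Equiv.Perm ℕ) (m n : ℕ)
    (hm : 1 ≤ m) (hmN : m ≤ N) (hn : 1 ≤ n) (hnN : n ≤ N) (hi : morse σ m = morse σ n + 1)
    (hadj : m = n + 1 ∨ n = m + 1) : hasEdge N σ m n := by
  refine ⟨hm, hmN, hn, hnN, hi, ?_⟩
  rintro ⟨w, hw1, hw2, -⟩
  omega

theorem symm_odd (r q : ℕ) (σ : Equiv.Perm ℕ) (hσ : SigmaRQ r q σ) (K j : ℕ) (hK : K ≤ q)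
    (hj : j ≤ r) : σ.symm (2*((r+1)*K) + (2*j+1)) = 2*((q+1)*j) + 2*K + 1 := by
  rw [Equiv.symm_apply_eq, show 2*((q+1)*j) + 2*K + 1 = 2*((q+1)*j+K)+1 by ring,
    hσ.2.1 j K hj hK]
  ring

theorem symm_even (r q : ℕ) (σ : Equiv.Perm ℕ) (hσ : SigmaRQ r q σ) (K j : ℕ) (hK : K ≤ q)
    (hj : j ≤ r) (h : ¬ (j = 0 ∧ K = 0)) :
    σ.symm (2*((r+1)*K) + 2*j) = 2*((q+1)*(r-j)) + 2*(q-K) + 2 := by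
  rw [Equiv.symm_apply_eq,
    show 2*((q+1)*(r-j)) + 2*(q-K) + 2 = 2*((q+1)*(r-j)+(q-K)+1) by ring,
    hσ.2.2 j K hj hK h]
  ring

/-- Closed form for the Morse numbers. -/
def closedMorse (r q K t : ℕ) : ℤ :=
  if 2*K ≤ q then 2*(K:ℤ) - 1 + min (t:ℤ) (2*r+2-t) else 2*(q:ℤ)+1-2*K + min (t:ℤ) (2*r-t)

theorem morse_succ (σ : Equiv.Perm ℕ) (p : ℕ) (hp : 1 ≤ p) : morse σ (p+1) = morse σ p +
    (-1)^(p+1) * Int.sign ((σ.symm (p+1) : ℤ) - (σ.symm p : ℤ)) := by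
  obtain ⟨p, rfl⟩ : ∃ m', p = m' + 1 := ⟨p - 1, by omega⟩
  rfl

/-- Monotonicity comparison used for the sign computations. -/
theorem mul_gap (q a b : ℕ) (h : a < b) : (q+1)*a + (q+1) ≤ (q+1)*b := by
  nlinarith [Nat.mul_le_mul_left (q+1) (Nat.succ_le_of_lt h)]

theorem morse_step (r q : ℕ) (σ : Equiv.Perm ℕ) (hσ : SigmaRQ r q σ) (K t : ℕ) (hK : K ≤ q)
    (ht : t ≤ 2*r) (h : ¬ (t = 0 ∧ K = 0)) :
    morse σ (2*((r+1)*K) + (t+1)) = morse σ (2*((r+1)*K) + t) +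
      (if t < r ∨ (t = r ∧ 2*K ≤ q) then 1 else -1) := by
  have hp : 1 ≤ 2*((r+1)*K) + t := by
    rcases Nat.eq_zero_or_pos K with hK0 | hK0
    · omega
    · have : 0 < (r+1)*K := by positivity
      omega
  rw [← add_assoc, morse_succ σ _ hp, add_assoc]
  congr 1
  rcases Nat.even_or_odd' t with ⟨j, rfl | rfl⟩
  · have e : (-1 : ℤ)^(2*((r+1)*K) + (2*j+1)) = -1 := by
      rcases neg_one_pow_cases (2*((r+1)*K) + (2*j+1)) with ⟨_, h'⟩ | ⟨_, h'⟩ <;> omega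
    rw [e, symm_odd r q σ hσ K j hK (by omega), symm_even r q σ hσ K j hK (by omega) (by omega)]
    rcases lt_trichotomy j (r - j) with hlt | heq | hgt
    · have := mul_gap q _ _ hlt
      rw [if_pos (by omega), Int.sign_eq_neg_one_of_neg (by omega)]
      rfl
    · rw [← heq]
      split_ifs
      · rw [Int.sign_eq_neg_one_of_neg (by omega)]
        rfl
      · rw [Int.sign_eq_one_of_pos (by omega)]
        rfl
    · have := mul_gap q _ _ hgt
      rw [if_neg (by omega), Int.sign_eq_one_of_pos (by omega)]
      rfl
  · have e : (-1 : ℤ)^(2*((r+1)*K) + (2*j+1+1)) = 1 := by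
      rcases neg_one_pow_cases (2*((r+1)*K) + (2*j+1+1)) with ⟨_, h'⟩ | ⟨_, h'⟩ <;> omega
    rw [e, symm_odd r q σ hσ K j hK (by omega), show 2*j+1+1 = 2*(j+1) by ring,
      symm_even r q σ hσ K (j+1) hK (by omega) (by omega)]
    rcases lt_trichotomy j (r - (j+1)) with hlt | heq | hgt
    · have := mul_gap q _ _ hlt
      rw [if_pos (by omega), Int.sign_eq_one_of_pos (by omega)]
      rfl
    · rw [← heq]
      split_ifs
      · rw [Int.sign_eq_one_of_pos (by omega)]
        rfl
      · rw [Int.sign_eq_neg_one_of_neg (by omega)]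
        rfl
    · have := mul_gap q _ _ hgt
      rw [if_neg (by omega), Int.sign_eq_neg_one_of_neg (by omega)]
      rfl

theorem morse_block (r q : ℕ) (σ : Equiv.Perm ℕ) (hσ : SigmaRQ r q σ) (K : ℕ) (hK : K + 1 ≤ q) :
    morse σ (2*((r+1)*(K+1)) + 0) = morse σ (2*((r+1)*K) + (2*r+1)) +
      (if 2*K+1 ≤ q then 1 else -1) := by
  have e0 : 2*((r+1)*(K+1)) + 2*0 = 2*((r+1)*K) + (2*r+1) + 1 := by ring
  have e1 := symm_even r q σ hσ (K+1) 0 hK (by omega) (by omega)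
  rw [e0] at e1
  have e2 := symm_odd r q σ hσ K r (by omega) le_rfl
  have e : (-1 : ℤ)^(2*((r+1)*K) + (2*r+1) + 1) = 1 := by
    rcases neg_one_pow_cases (2*((r+1)*K) + (2*r+1) + 1) with ⟨_, h'⟩ | ⟨_, h'⟩ <;> omega
  rw [show 2*((r+1)*(K+1)) + 0 = 2*((r+1)*K) + (2*r+1) + 1 by ring,
    morse_succ _ _ (by omega), e1, e2, e, Nat.sub_zero]
  congr 1
  split_ifs
  · rw [Int.sign_eq_one_of_pos (by omega)]
    rfl
  · rw [Int.sign_eq_neg_one_of_neg (by omega)]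
    rfl

theorem morse_row (r q : ℕ) (σ : Equiv.Perm ℕ) (hσ : SigmaRQ r q σ) (K s : ℕ) (hK : K ≤ q)
    (hs : ¬ (s = 0 ∧ K = 0))
    (hbase : morse σ (2*((r+1)*K) + s) = closedMorse r q K s) (d : ℕ) : s + d ≤ 2*r+1 →
    morse σ (2*((r+1)*K) + (s+d)) = closedMorse r q K (s+d) := by
  induction d with
  | zero => intro _; exact hbase
  | succ d ih =>
    intro hd
    rw [← add_assoc s, morse_step r q σ hσ K (s+d) hK (by omega) (by omega), ih (by omega)]
    simp only [closedMorse]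
    push_cast
    split_ifs <;> omega

theorem morse_closed (r q : ℕ) (σ : Equiv.Perm ℕ) (hσ : SigmaRQ r q σ) (K : ℕ) :
    K ≤ q → ∀ t, t ≤ 2*r+1 → ¬ (t = 0 ∧ K = 0) →
    morse σ (2*((r+1)*K) + t) = closedMorse r q K t := by
  induction K with
  | zero =>
    intro hK t ht h
    have hb : morse σ (2*((r+1)*0) + 1) = closedMorse r q 0 1 := by
      simp only [mul_zero, zero_add, morse, closedMorse]
      split_ifs <;> push_cast <;> omega
    have := morse_row r q σ hσ 0 1 hK (by omega) hb (t-1) (by omega)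
    rwa [show 1 + (t-1) = t by omega] at this
  | succ K ih =>
    intro hK t ht h
    have hb : morse σ (2*((r+1)*(K+1)) + 0) = closedMorse r q (K+1) 0 := by
      rw [morse_block r q σ hσ K hK, ih (by omega) (2*r+1) le_rfl (by omega)]
      simp only [closedMorse]
      push_cast
      split_ifs <;> omega
    have := morse_row r q σ hσ (K+1) 0 hK (by omega) hb t (by omega)
    rwa [zero_add] at this

/-- Block and offset of the peak of row `k` (label `B^r_k`). -/
def peakK (q k : ℕ) : ℕ := if k % 2 = 0 then k / 2 else (2*q+1-k) / 2
def peakT (r k : ℕ) : ℕ := if k % 2 = 0 then r + 1 else r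
def peakPos (r q k : ℕ) : ℕ := 2*((r+1)*peakK q k) + peakT r k

theorem symm_peak (r q : ℕ) (hr : 1 ≤ r) (σ : Equiv.Perm ℕ) (hσ : SigmaRQ r q σ) (k : ℕ)
    (hk : k ≤ q) :
    (σ.symm (peakPos r q k) : ℤ) =
      if r % 2 = 0 then ((q:ℤ)+1)*r + k + 1 else ((q:ℤ)+1)*(r+1) - k := by
  have hK : peakK q k ≤ q := by unfold peakK; split_ifs <;> omega
  unfold peakPos
  rcases Nat.even_or_odd' (peakT r k) with ⟨j, h | h⟩
  · rw [h, symm_even r q σ hσ _ j hK (by unfold peakT at h; split_ifs at h <;> omega)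
      (by unfold peakT at h; split_ifs at h <;> omega)]
    unfold peakT at h
    unfold peakK
    split_ifs at h ⊢
    · omega
    · obtain ⟨i, rfl⟩ : ∃ i, r = 2*i+1 := ⟨r/2, by omega⟩
      rw [show 2*i+1-j = i by omega]
      have : ((q - k/2 : ℕ) : ℤ) * 2 = 2*q - k := by omega
      push_cast
      linarith
    · obtain rfl : r = 2*j := h
      rw [show 2*j-j = j by omega]
      have : ((q - (2*q+1-k)/2 : ℕ) : ℤ) * 2 = k - 1 := by omega
      push_cast
      linarith
    · omega
  · rw [h, symm_odd r q σ hσ _ j hK (by unfold peakT at h; split_ifs at h <;> omega)]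
    unfold peakT at h
    unfold peakK
    split_ifs at h ⊢
    · obtain rfl : r = 2*j := by omega
      have : ((k/2 : ℕ) : ℤ) * 2 = k := by omega
      rw [Nat.cast_add, Nat.cast_add, Nat.cast_mul 2 (k/2)]
      push_cast at this ⊢
      linarith
    · omega
    · omega
    · obtain rfl : r = 2*j+1 := h
      have : (((2*q+1-k)/2 : ℕ) : ℤ) * 2 = 2*q+1-k := by omega
      generalize (2*q+1-k)/2 = K at *
      push_cast
      linarith

theorem pos_le (r q K t : ℕ) (hK : K ≤ q) (ht : t ≤ 2*r+1) :
    2*((r+1)*K) + t ≤ 2*(r+1)*(q+1)-1 := by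
  have := Nat.mul_le_mul_left (r+1) hK
  have e : 2*(r+1)*(q+1) = 2*((r+1)*q) + 2*(r+1) := by ring
  omega

theorem pos_ge (r K t : ℕ) (h : ¬ (t = 0 ∧ K = 0)) : 1 ≤ 2*((r+1)*K) + t := by
  rcases Nat.eq_zero_or_pos K with hK0 | hK0
  · omega
  · have : 0 < (r+1)*K := by positivity
    omega

theorem pos_decomp (r q m : ℕ) (hm : 1 ≤ m) (hm' : m ≤ 2*(r+1)*(q+1)-1) :
    ∃ K t, K ≤ q ∧ t ≤ 2*r+1 ∧ ¬ (t = 0 ∧ K = 0) ∧ m = 2*((r+1)*K) + t := by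
  have hd := Nat.div_add_mod m (2*(r+1))
  have hl := Nat.mod_lt m (show 0 < 2*(r+1) by omega)
  have e : 2*(r+1)*(m / (2*(r+1))) = 2*((r+1)*(m / (2*(r+1)))) := by ring
  refine ⟨m / (2*(r+1)), m % (2*(r+1)), ?_, by omega, ?_, by omega⟩
  · have : m / (2*(r+1)) < q+1 := by
      rw [Nat.div_lt_iff_lt_mul (by omega)]
      have : 0 < 2*(r+1)*(q+1) := by positivity
      have e2 : (q+1)*(2*(r+1)) = 2*(r+1)*(q+1) := by ring
      omega
    omega
  · rintro ⟨h1, h2⟩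
    rw [h1, h2] at hd
    omega

theorem peak_bounds (r q k : ℕ) (hr : 1 ≤ r) (hk : k ≤ q) :
    peakK q k ≤ q ∧ peakT r k ≤ 2*r+1 ∧ ¬ (peakT r k = 0 ∧ peakK q k = 0) := by
  have hT : peakT r k = r + 1 ∨ peakT r k = r := by
    unfold peakT
    split_ifs <;> simp
  have hK : peakK q k ≤ q := by
    unfold peakK
    split_ifs <;> omega
  refine ⟨hK, ?_, ?_⟩ <;> omega

theorem morse_peak (r q : ℕ) (hr : 1 ≤ r) (σ : Equiv.Perm ℕ) (hσ : SigmaRQ r q σ) (k : ℕ)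
    (hk : k ≤ q) : morse σ (peakPos r q k) = r + k := by
  obtain ⟨h1, h2, h3⟩ := peak_bounds r q k hr hk
  rw [peakPos, morse_closed r q σ hσ _ h1 _ h2 h3]
  by_cases hp : k % 2 = 0
  · rw [closedMorse, peakK, peakT, if_pos hp, if_pos hp, if_pos (by omega)]
    omega
  · rw [closedMorse, peakK, peakT, if_neg hp, if_neg hp, if_neg (by omega)]
    omega

/-- Descent along the axis through the peaks. -/
theorem reach_peak (r q : ℕ) (hr : 1 ≤ r) (σ : Equiv.Perm ℕ) (hσ : SigmaRQ r q σ) (d : ℕ) :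
    d ≤ q → Relation.ReflTransGen (hasEdge (2*(r+1)*(q+1)-1) σ)
      (peakPos r q q) (peakPos r q (q-d)) := by
  have h0 : σ.symm 0 = 0 := by
    rw [Equiv.symm_apply_eq, hσ.1 0 (by simp)]
  have h1 : σ.symm 1 = 1 := by
    simpa using symm_odd r q σ hσ 0 0 (by omega) (by omega)
  induction d with
  | zero => intro _; exact Relation.ReflTransGen.refl
  | succ d ih =>
    intro hd
    refine (ih (by omega)).tail ?_
    obtain ⟨k, hk, hk'⟩ : ∃ k, q - d = k + 1 ∧ q - (d+1) = k := ⟨q-(d+1), by omega, rfl⟩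
    rw [hk, hk']
    obtain ⟨a1, a2, a3⟩ := peak_bounds r q k hr (by omega)
    obtain ⟨b1, b2, b3⟩ := peak_bounds r q (k+1) hr (by omega)
    refine edge_axis _ σ h0 h1 _ _ (pos_ge _ _ _ b3) (pos_le _ _ _ _ b1 b2) (pos_ge _ _ _ a3)
      (pos_le _ _ _ _ a1 a2) ?_ ?_
    · rw [morse_peak r q hr σ hσ k (by omega), morse_peak r q hr σ hσ (k+1) (by omega)]
      push_cast
      ring
    · have e1 := symm_peak r q hr σ hσ k (by omega)
      have e2 := symm_peak r q hr σ hσ (k+1) (by omega)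
      split_ifs at e1 e2 <;> push_cast at e1 e2 <;> omega

/-- Descent along the meander inside one row. -/
theorem reach_row (r q : ℕ) (σ : Equiv.Perm ℕ) (hσ : SigmaRQ r q σ) (K s : ℕ) (hK : K ≤ q)
    (hs : s = if 2*K ≤ q then r + 1 else r) (d : ℕ) :
    (s + d ≤ 2*r+1 → Relation.ReflTransGen (hasEdge (2*(r+1)*(q+1)-1) σ)
      (2*((r+1)*K) + s) (2*((r+1)*K) + (s+d))) ∧
    (d ≤ s → ¬ (s - d = 0 ∧ K = 0) → Relation.ReflTransGen (hasEdge (2*(r+1)*(q+1)-1) σ)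
      (2*((r+1)*K) + s) (2*((r+1)*K) + (s-d))) := by
  have hs' : s ≤ 2*r+1 := by split_ifs at hs <;> omega
  induction d with
  | zero => exact ⟨fun _ => .refl, fun _ _ => .refl⟩
  | succ d ih =>
    constructor
    · intro hd
      have n2 : ¬ (s + d + 1 = 0 ∧ K = 0) := by omega
      by_cases n1 : s + d = 0 ∧ K = 0
      · split_ifs at hs <;> omega
      refine (ih.1 (by omega)).tail ?_
      refine edge_meander _ σ _ _ (pos_ge _ _ _ n1) (pos_le _ _ _ _ hK (by omega))
        (pos_ge _ _ _ n2) (pos_le _ _ _ _ hK hd) ?_ (by omega)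
      rw [← add_assoc s, morse_step r q σ hσ K (s+d) hK (by omega) n1, if_neg (by split_ifs at hs <;> omega)]
      ring
    · intro hd n
      refine (ih.2 (by omega) (by omega)).tail ?_
      refine edge_meander _ σ _ _ (pos_ge _ _ _ (by omega)) (pos_le _ _ _ _ hK (by omega))
        (pos_ge _ _ _ n) (pos_le _ _ _ _ hK (by omega)) ?_ (by omega)
      have := morse_step r q σ hσ K (s-(d+1)) hK (by split_ifs at hs <;> omega) n
      rw [show s-(d+1)+1 = s-d by omega] at this
      rw [this, if_pos (by split_ifs at hs <;> omega)]

/-- there is exactly one meander position of maximal Morse number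
`r+q`, and every other position is reachable from it by a directed path in the
connection digraph (`A_{rq}` is a Sturm ball of dimension `r+q`). -/
theorem stmt_11 (r q : ℕ) (hr : 1 ≤ r) (hq : 1 ≤ q) (hrq : 1 < r*q)
    (σ : Equiv.Perm ℕ) (hσ : SigmaRQ r q σ) :
    ∃ mstar : ℕ, 1 ≤ mstar ∧ mstar ≤ 2*(r+1)*(q+1)-1 ∧
      morse σ mstar = (r : ℤ) + (q : ℤ) ∧
      (∀ m, 1 ≤ m → m ≤ 2*(r+1)*(q+1)-1 →
        morse σ m = (r : ℤ) + (q : ℤ) → m = mstar) ∧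
      (∀ m, 1 ≤ m → m ≤ 2*(r+1)*(q+1)-1 → m ≠ mstar →
        Relation.ReflTransGen (hasEdge (2*(r+1)*(q+1)-1) σ) mstar m) := by
  refine ⟨peakPos r q q, ?_, ?_, morse_peak r q hr σ hσ q le_rfl, ?_, ?_⟩
  · exact pos_ge _ _ _ (peak_bounds r q q hr le_rfl).2.2
  · exact pos_le _ _ _ _ (peak_bounds r q q hr le_rfl).1 (peak_bounds r q q hr le_rfl).2.1
  · intro m hm hm' hi
    obtain ⟨K, t, hK, ht, hn, rfl⟩ := pos_decomp r q m hm hm'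
    rw [morse_closed r q σ hσ K hK t ht hn] at hi
    have hc : K = peakK q q ∧ t = peakT r q := by
      unfold closedMorse at hi
      unfold peakK peakT
      split_ifs at hi ⊢ <;> omega
    rw [hc.1, hc.2, peakPos]
  · intro m hm hm' _
    obtain ⟨K, t, hK, ht, hn, rfl⟩ := pos_decomp r q m hm hm'
    obtain ⟨k, hk, hkK, hkT⟩ : ∃ k, k ≤ q ∧ peakK q k = K ∧
        peakT r k = if 2*K ≤ q then r + 1 else r := by
      by_cases h : 2*K ≤ q
      · refine ⟨2*K, h, ?_, ?_⟩ <;> simp [peakK, peakT, h]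
      · have hodd : ¬ ((2*q+1-2*K) % 2 = 0) := by omega
        refine ⟨2*q+1-2*K, by omega, ?_, ?_⟩
        · rw [peakK, if_neg hodd]
          omega
        · rw [peakT, if_neg hodd, if_neg h]
    have h1 := reach_peak r q hr σ hσ (q-k) (by omega)
    rw [show q - (q-k) = k by omega] at h1
    refine h1.trans ?_
    rw [show peakPos r q k = 2*((r+1)*K) + peakT r k by rw [peakPos, hkK]]
    rcases le_total (peakT r k) t with hle | hle
    · have := (reach_row r q σ hσ K _ hK hkT (t - peakT r k)).1 (by omega)
      rwa [show peakT r k + (t - peakT r k) = t by omega] at this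
    · have e : peakT r k - (peakT r k - t) = t := by omega
      have := (reach_row r q σ hσ K _ hK hkT (peakT r k - t)).2 (by omega) (by rwa [e])
      rwa [e] at this
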